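/- Square-function bound by the projected seminorm: Let s ∈ (0,1), 1 < p < ∞, and f ∈ L^p(ℝ^d; ℝ^d). Set F = (f, 0) : ℝ^d → ℝ^{d+1} and U(x,t) = (ℙ_t ∗ F)(x). Then there exists a constant C = C(d,p,s) > 0 such that ( ∫_0^∞ ( t^{1−s} ‖∂_t U(·,t)‖_{L^p(ℝ^d)} )^p (dt/t) )^{1/p} ≤ C · [f]_{𝒳^s_p(ℝ^d)}. -/

import Mathlib

open MeasureTheory Filter Set
open scoped ENNReal NNReal Topology

noncomputable section

abbrev Ed (d : ℕ) : Type := EuclideanSpace ℝ (Fin d)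

/-- The `p`-th power of the projected Gagliardo seminorm `[f]_{𝒳^s_p(Ω)}^p`. -/
def projGagP (d : ℕ) (s p : ℝ) (Ω : Set (Ed d)) (f : Ed d → Ed d) : ℝ≥0∞ :=
  ∫⁻ x in Ω, ∫⁻ y in Ω,
    ENNReal.ofReal ((|(inner ℝ (f y - f x) (y - x) : ℝ)| / ‖y - x‖) ^ p /
      ‖y - x‖ ^ ((d : ℝ) + s * p))

/-- The projected Gagliardo seminorm `[f]_{𝒳^s_p(Ω)}`. -/
def projSem (d : ℕ) (s p : ℝ) (Ω : Set (Ed d)) (f : Ed d → Ed d) : ℝ≥0∞ :=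
  projGagP d s p Ω f ^ (1 / p)

/-- The `p`-th power of the Gagliardo seminorm `[f]_{W^{s,p}(Ω)}^p`. -/
def gagP (d : ℕ) (s p : ℝ) (Ω : Set (Ed d)) (f : Ed d → Ed d) : ℝ≥0∞ :=
  ∫⁻ x in Ω, ∫⁻ y in Ω,
    ENNReal.ofReal (‖f y - f x‖ ^ p / ‖y - x‖ ^ ((d : ℝ) + s * p))

/-- The Gagliardo seminorm `[f]_{W^{s,p}(Ω)}`. -/
def gagSem (d : ℕ) (s p : ℝ) (Ω : Set (Ed d)) (f : Ed d → Ed d) : ℝ≥0∞ :=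
  gagP d s p Ω f ^ (1 / p)

/-- The surface measure `ω_d` of the unit sphere in `ℝ^{d+1}`. -/
def sphereVol (d : ℕ) : ℝ :=
  ((d : ℝ) + 1) * (volume (Metric.ball (0 : EuclideanSpace ℝ (Fin (d+1))) 1)).toReal

/-- The Poisson kernel `p_t(x)` for the upper half-space `ℝ^d × (0,∞)`. -/
def halfSpacePoissonKernel (d : ℕ) (t : ℝ) (x : Ed d) : ℝ :=
  (2 / sphereVol d) * t / (‖x‖ ^ 2 + t ^ 2) ^ (((d : ℝ) + 1) / 2)

/-- The (componentwise) Poisson integral `u(x,t) = (p_t ∗ f)(x)` of a vector field. -/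
def poissonInt (d m : ℕ) (f : Ed d → Ed m) (x : Ed d) (t : ℝ) : Ed m :=
  ∫ y, halfSpacePoissonKernel d t y • f (x - y)

/-- The vector `(x, t) ∈ ℝ^{d+1}`. -/
def snocVec (d : ℕ) (x : Ed d) (t : ℝ) : Fin (d + 1) → ℝ := Fin.snoc (fun i => x i) t

/-- The entries `𝔭_t^{jk}(x)` of the Poisson-type matrix kernel `ℙ_t`. -/
def pEntry (d : ℕ) (t : ℝ) (j k : Fin (d + 1)) (x : Ed d) : ℝ :=
  (2 * ((d : ℝ) + 1) / sphereVol d) * t * snocVec d x t j *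
    snocVec d x t k / (‖x‖ ^ 2 + t ^ 2) ^ (((d : ℝ) + 3) / 2)

/-- The Poisson-type integral `U(x,t) = (ℙ_t ∗ F)(x)`, the convolution taken in the sense of
matrix–vector multiplication. -/
def pConv (d : ℕ) (t : ℝ) (F : Ed d → Ed (d + 1)) (x : Ed d) : Ed (d + 1) :=
  (EuclideanSpace.equiv (Fin (d + 1)) ℝ).symm
    (fun i => ∫ y, ∑ j, pEntry d t i j y * F (x - y) j)

/-- The field `F = (f, 0) : ℝ^d → ℝ^{d+1}` obtained by appending a zero component. -/
def appendZero (d : ℕ) (f : Ed d → Ed d) : Ed d → Ed (d + 1) :=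
  fun y => (EuclideanSpace.equiv (Fin (d + 1)) ℝ).symm (Fin.snoc (fun i => f y i) 0)


/-- The decay profile `(|y|² + t²)^{-(d+1)/2}`. -/
def qK (d : ℕ) (t : ℝ) (y : Ed d) : ℝ := (‖y‖ ^ 2 + t ^ 2) ^ (-((d : ℝ) + 1) / 2)

def cK (d : ℕ) : ℝ := 2 * ((d : ℝ) + 1) / sphereVol d

lemma cK_nonneg (d : ℕ) : 0 ≤ cK d := by
  unfold cK sphereVol; positivity

/-- The integrand of the `i`-th component. -/
def HK (d : ℕ) (i : Fin (d + 1)) (t : ℝ) (y w : Ed d) : ℝ :=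
  cK d * t * snocVec d y t i * (inner ℝ y w) * (‖y‖ ^ 2 + t ^ 2) ^ (-(((d : ℝ) + 3) / 2))

def HK' (d : ℕ) (i : Fin (d + 1)) (t : ℝ) (y w : Ed d) : ℝ :=
  cK d * (snocVec d y t i + t * snocVec d 0 1 i) * (inner ℝ y w) *
      (‖y‖ ^ 2 + t ^ 2) ^ (-(((d : ℝ) + 3) / 2)) -
    cK d * t * snocVec d y t i * (inner ℝ y w) * (((d : ℝ) + 3) * t) *
      (‖y‖ ^ 2 + t ^ 2) ^ (-(((d : ℝ) + 3) / 2) - 1)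

lemma sum_pEntry (d : ℕ) (t : ℝ) (i : Fin (d + 1)) (y : Ed d) (f : Ed d → Ed d) (z : Ed d) :
    ∑ j, pEntry d t i j y * appendZero d f z j = HK d i t y (f z) := by
  have hQ : 0 ≤ ‖y‖ ^ 2 + t ^ 2 := by positivity
  rw [Fin.sum_univ_castSucc]
  simp only [appendZero, pEntry, HK, snocVec, EuclideanSpace.equiv, cK]
  rw [Real.rpow_neg hQ, PiLp.inner_apply]
  simp [Finset.mul_sum, Finset.sum_mul]
  refine Finset.sum_congr rfl fun j _ => ?_
  ring

lemma snocVec_hasDerivAt (d : ℕ) (i : Fin (d + 1)) (t : ℝ) (y : Ed d) :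
    HasDerivAt (fun τ => snocVec d y τ i) (snocVec d 0 1 i) t := by
  refine Fin.lastCases ?_ (fun j => ?_) i
  · simp only [snocVec, Fin.snoc_last]
    exact hasDerivAt_id t
  · simpa [snocVec] using hasDerivAt_const t _

lemma snocVec_abs_le (d : ℕ) (i : Fin (d + 1)) (t : ℝ) (y : Ed d) :
    |snocVec d y t i| ≤ (‖y‖ ^ 2 + t ^ 2) ^ (1 / 2 : ℝ) := by
  rw [← Real.sqrt_eq_rpow]
  refine Fin.lastCases ?_ (fun j => ?_) i
  · simp only [snocVec, Fin.snoc_last]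
    exact Real.abs_le_sqrt (by nlinarith [sq_nonneg ‖y‖])
  · simp only [snocVec, Fin.snoc_castSucc]
    have := PiLp.norm_apply_le y j
    rw [Real.norm_eq_abs] at this
    refine this.trans (Real.le_sqrt_of_sq_le (by nlinarith [sq_nonneg t]))

lemma snocVec01_abs_le (d : ℕ) (i : Fin (d + 1)) : |snocVec d 0 1 i| ≤ 1 := by
  refine (snocVec_abs_le d i 1 0).trans ?_
  simp

lemma measurable_snocVec (d : ℕ) (i : Fin (d + 1)) (t : ℝ) :
    Measurable (fun y : Ed d => snocVec d y t i) := by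
  refine Fin.lastCases ?_ (fun j => ?_) i
  · simp [snocVec]
  · simp only [snocVec, Fin.snoc_castSucc]
    fun_prop

lemma HK_hasDerivAt (d : ℕ) (i : Fin (d + 1)) (t : ℝ) (ht : 0 < t) (y w : Ed d) :
    HasDerivAt (fun τ => HK d i τ y w) (HK' d i t y w) t := by
  have hQ : 0 < ‖y‖ ^ 2 + t ^ 2 := by positivity
  have h1 := ((hasDerivAt_id t).const_mul (cK d)).mul (snocVec_hasDerivAt d i t y)
  have h2 : HasDerivAt (fun τ : ℝ => ‖y‖ ^ 2 + τ ^ 2) (2 * t) t := by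
    simpa using (hasDerivAt_pow 2 t).const_add (‖y‖ ^ 2)
  have h3 := h2.rpow_const (p := -(((d : ℝ) + 3) / 2)) (Or.inl hQ.ne')
  have h4 := (h1.mul_const (inner ℝ y w)).mul h3
  refine h4.congr_deriv ?_
  simp only [HK', id, Pi.mul_apply]
  ring

lemma HK'_bound (d : ℕ) (i : Fin (d + 1)) (t : ℝ) (ht : 0 < t) (y w : Ed d) :
    |HK' d i t y w| ≤ cK d * (d + 5) * (qK d t y * (|inner ℝ w y| / ‖y‖)) := by
  rcases eq_or_ne y 0 with rfl | hy
  · simp [HK']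
  have hy' : 0 < ‖y‖ := norm_pos_iff.2 hy
  rw [real_inner_comm]
  set g := |inner ℝ y w| / ‖y‖ with hg
  have hg0 : 0 ≤ g := by positivity
  have hin : |inner ℝ y w| = ‖y‖ * g := by rw [hg]; field_simp
  have hQ : 0 < ‖y‖ ^ 2 + t ^ 2 := by positivity
  set Q := ‖y‖ ^ 2 + t ^ 2 with hQd
  have e1 : Q ^ (-(((d : ℝ) + 3) / 2) - 1) = Q ^ (-(((d : ℝ) + 3) / 2)) / Q := by
    rw [Real.rpow_sub_one hQ.ne']
  have hr : Q ^ (1 / 2 : ℝ) * Q ^ (1 / 2 : ℝ) = Q := by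
    rw [← Real.rpow_add hQ]; norm_num
  have e2 : qK d t y = Q * Q ^ (-(((d : ℝ) + 3) / 2)) := by
    rw [qK, ← hQd, mul_comm, ← Real.rpow_add_one hQ.ne']; congr 1; ring
  have hs := snocVec_abs_le d i t y
  have hs1 := snocVec01_abs_le d i
  rw [← hQd] at hs
  rw [e2, HK', ← hQd, e1]
  set P := Q ^ (-(((d : ℝ) + 3) / 2)) with hP
  have hP0 : 0 < P := by positivity
  set r := Q ^ (1 / 2 : ℝ) with hrd
  have hr0 : 0 < r := by positivity
  set σ := snocVec d y t i
  set e := snocVec d 0 1 i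
  have hyr : ‖y‖ ≤ r := by nlinarith [sq_nonneg t]
  have htr : t ≤ r := by nlinarith [sq_nonneg ‖y‖]
  have hc := cK_nonneg d
  have htQ : t * t / Q ≤ 1 := by rw [div_le_one hQ]; nlinarith
  calc |cK d * (σ + t * e) * inner ℝ y w * P - cK d * t * σ * inner ℝ y w * ((↑d + 3) * t) * (P / Q)|
      = |(σ + t * e) - σ * (d + 3) * (t * t / Q)| * (cK d * (‖y‖ * g) * P) := by
        rw [← hin, show cK d * |inner ℝ y w| * P = |cK d * inner ℝ y w * P| by
          rw [abs_mul, abs_mul, abs_of_nonneg hc, abs_of_pos hP0], ← abs_mul]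
        congr 1; field_simp
    _ ≤ (r * (d + 5)) * (cK d * (r * g) * P) := by
        gcongr
        have a1 : |t * e| ≤ r * 1 := by
          rw [abs_mul, abs_of_pos ht]; gcongr
        have a2 : |σ * (d + 3) * (t * t / Q)| ≤ r * (d + 3) * 1 := by
          rw [abs_mul, abs_mul, abs_of_pos (show (0 : ℝ) < d + 3 by positivity),
            abs_of_nonneg (show 0 ≤ t * t / Q by positivity)]
          gcongr
        have := abs_sub (σ + t * e) (σ * (d + 3) * (t * t / Q))
        have := abs_add_le σ (t * e)
        linarith
    _ = cK d * (d + 5) * (Q * P * g) := by rw [← hr]; ring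

lemma HK_bound (d : ℕ) (i : Fin (d + 1)) (t : ℝ) (ht : 0 < t) (y w : Ed d) :
    |HK d i t y w| ≤ cK d * t * (qK d t y * ‖w‖) := by
  have hQ : 0 < ‖y‖ ^ 2 + t ^ 2 := by positivity
  have hin := abs_real_inner_le_norm y w
  have hs := snocVec_abs_le d i t y
  rw [HK, qK]
  set Q := ‖y‖ ^ 2 + t ^ 2 with hQd
  have hr : Q ^ (1 / 2 : ℝ) * Q ^ (1 / 2 : ℝ) = Q := by
    rw [← Real.rpow_add hQ]; norm_num
  have e2 : Q ^ (-((d : ℝ) + 1) / 2) = Q * Q ^ (-(((d : ℝ) + 3) / 2)) := by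
    rw [mul_comm, ← Real.rpow_add_one hQ.ne']; congr 1; ring
  rw [e2]
  set P := Q ^ (-(((d : ℝ) + 3) / 2)) with hP
  have hP0 : 0 < P := by positivity
  set r := Q ^ (1 / 2 : ℝ) with hrd
  have hr0 : 0 < r := by positivity
  have hyr : ‖y‖ ≤ r := by nlinarith [sq_nonneg t, norm_nonneg y]
  have hc := cK_nonneg d
  rw [abs_mul, abs_mul, abs_mul, abs_mul, abs_of_nonneg hc, abs_of_pos ht, abs_of_pos hP0]
  calc cK d * t * |snocVec d y t i| * |inner ℝ y w| * P
      ≤ cK d * t * r * (r * ‖w‖) * P := by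
        gcongr
        exact hin.trans (by gcongr)
    _ = cK d * t * (Q * P * ‖w‖) := by rw [← hr]; ring

lemma HK_add (d : ℕ) (i : Fin (d + 1)) (t : ℝ) (y v w : Ed d) :
    HK d i t y (v + w) = HK d i t y v + HK d i t y w := by
  simp only [HK, inner_add_right]; ring

lemma HK_measurable (d : ℕ) (i : Fin (d + 1)) (t : ℝ) (w : Ed d → Ed d) (hw : Measurable w) :
    Measurable (fun y => HK d i t y (w y)) := by
  have := measurable_snocVec d i t
  unfold HK
  fun_prop

lemma HK'_measurable (d : ℕ) (i : Fin (d + 1)) (t : ℝ) (w : Ed d → Ed d) (hw : Measurable w) :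
    Measurable (fun y => HK' d i t y (w y)) := by
  have := measurable_snocVec d i t
  unfold HK'
  fun_prop

lemma qK_measurable (d : ℕ) : Measurable (fun z : ℝ × Ed d => qK d z.1 z.2) := by
  unfold qK
  fun_prop

lemma qK_nonneg (d : ℕ) (t : ℝ) (y : Ed d) : 0 ≤ qK d t y := by unfold qK; positivity

lemma qK_anti (d : ℕ) (s t : ℝ) (hs : 0 < s) (hst : s ≤ t) (y : Ed d) : qK d t y ≤ qK d s y := by
  unfold qK
  refine Real.rpow_le_rpow_of_nonpos (by positivity) (by gcongr) ?_
  have : (0 : ℝ) ≤ d := by positivity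
  linarith

lemma qK_le (d : ℕ) (t : ℝ) (ht : 0 < t) (y : Ed d) : qK d t y ≤ qK d t 0 := by
  unfold qK
  refine Real.rpow_le_rpow_of_nonpos (by simp; positivity) (by simp) ?_
  have : (0 : ℝ) ≤ d := by positivity
  linarith

lemma Q_smul (d : ℕ) (t : ℝ) (ht : 0 < t) (y : Ed d) (a : ℝ) :
    (‖t • y‖ ^ 2 + t ^ 2) ^ a = t ^ (2 * a) * (‖y‖ ^ 2 + 1 ^ 2) ^ a := by
  rw [norm_smul, Real.norm_of_nonneg ht.le, show (t * ‖y‖) ^ 2 + t ^ 2 = t ^ 2 * (‖y‖ ^ 2 + 1 ^ 2) by ring,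
    Real.mul_rpow (by positivity) (by positivity), Real.rpow_mul ht.le]
  norm_num

lemma qK_smul (d : ℕ) (t : ℝ) (ht : 0 < t) (y : Ed d) :
    qK d t (t • y) = t ^ (-((d : ℝ) + 1)) * qK d 1 y := by
  unfold qK
  rw [Q_smul d t ht]
  congr 2; ring

lemma snocVec_smul (d : ℕ) (t : ℝ) (y : Ed d) (i : Fin (d + 1)) :
    snocVec d (t • y) t i = t * snocVec d y 1 i := by
  refine Fin.lastCases ?_ (fun j => ?_) i <;> simp [snocVec]

lemma HK_smul (d : ℕ) (i : Fin (d + 1)) (t : ℝ) (ht : 0 < t) (y v : Ed d) :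
    HK d i t (t • y) v = (t ^ d)⁻¹ * HK d i 1 y v := by
  unfold HK
  rw [Q_smul d t ht, snocVec_smul, inner_smul_left]
  have : t ^ (2 * (-(((d : ℝ) + 3) / 2))) = (t ^ d)⁻¹ * (t ^ 3)⁻¹ := by
    rw [← mul_inv, ← pow_add, ← Real.rpow_natCast, ← Real.rpow_neg ht.le]
    congr 1; push_cast; ring
  rw [this]
  simp only [conj_trivial]
  field_simp

lemma integral_HK (d : ℕ) (i : Fin (d + 1)) (t : ℝ) (ht : 0 < t) (v : Ed d) :
    ∫ y, HK d i t y v = ∫ y, HK d i 1 y v := by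
  have h := Measure.integral_comp_smul (volume : Measure (Ed d)) (fun y => HK d i t y v) t
  simp only [HK_smul d i t ht, integral_const_mul, finrank_euclideanSpace, Fintype.card_fin,
    smul_eq_mul] at h
  rw [abs_of_pos (by positivity)] at h
  exact (mul_left_cancel₀ (by positivity) h).symm

lemma integrable_qK (d : ℕ) (t : ℝ) (ht : 0 < t) : Integrable (fun y : Ed d => qK d t y) := by
  have h1 : Integrable (fun y : Ed d => qK d 1 y) := by
    have := integrable_rpow_neg_one_add_norm_sq (E := Ed d) (μ := volume) (r := (d : ℝ) + 1) (by simp)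
    refine this.congr (Eventually.of_forall fun y => ?_)
    simp only [qK]; rw [add_comm]; norm_num
  have h2 : Integrable (fun y : Ed d => qK d t (t • y)) := by
    simp only [qK_smul d t ht]; exact h1.const_mul _
  exact (integrable_comp_smul_iff volume _ ht.ne').1 h2

lemma integrable_qK_mul (d : ℕ) (p t : ℝ) (hp : 1 < p) (ht : 0 < t) (f : Ed d → Ed d)
    (hf : MemLp f (ENNReal.ofReal p) volume) (hm : Measurable f) (x v : Ed d) :
    Integrable (fun y => qK d t y * ‖f (x - y) - v‖) := by
  have hq := integrable_qK d t ht
  have h1 : Integrable (fun y => ‖f y‖ ^ p) := by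
    have := hf.integrable_norm_rpow (by simp; linarith) (by simp)
    rwa [ENNReal.toReal_ofReal (by linarith)] at this
  have h2 : Integrable (fun y => ‖f (x - y)‖ ^ p) := h1.comp_sub_left x
  have h3 := (hq.mul_const (1 + ‖v‖)).add (h2.const_mul (qK d t 0))
  refine h3.mono' ?_ (Eventually.of_forall fun y => ?_)
  · have : Measurable (fun y => qK d t y) := by unfold qK; fun_prop
    refine Measurable.aestronglyMeasurable ?_
    fun_prop
  · have a0 := qK_nonneg d t y
    have a1 := qK_le d t ht y
    rw [Real.norm_of_nonneg (by positivity)]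
    have b : ‖f (x - y)‖ ≤ 1 + ‖f (x - y)‖ ^ p := by
      rcases le_total ‖f (x - y)‖ 1 with h | h
      · have : 0 ≤ ‖f (x - y)‖ ^ p := by positivity
        linarith
      · have := Real.self_le_rpow_of_one_le h hp.le
        linarith
    have c := norm_sub_le (f (x - y)) v
    calc qK d t y * ‖f (x - y) - v‖ ≤ qK d t y * (1 + ‖f (x - y)‖ ^ p + ‖v‖) := by
          gcongr; linarith
      _ = qK d t y * (1 + ‖v‖) + qK d t y * ‖f (x - y)‖ ^ p := by ring
      _ ≤ _ := by simp only [Pi.add_apply]; gcongr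

lemma integrable_HK (d : ℕ) (i : Fin (d + 1)) (p t : ℝ) (hp : 1 < p) (ht : 0 < t) (f : Ed d → Ed d)
    (hf : MemLp f (ENNReal.ofReal p) volume) (hm : Measurable f) (x v : Ed d) :
    Integrable (fun y => HK d i t y (f (x - y) - v)) := by
  refine ((integrable_qK_mul d p t hp ht f hf hm x v).const_mul (cK d * t)).mono' ?_
    (Eventually.of_forall fun y => ?_)
  · exact (HK_measurable d i t _ (by fun_prop)).aestronglyMeasurable
  · exact HK_bound d i t ht y _

lemma integrable_HK_const (d : ℕ) (i : Fin (d + 1)) (t : ℝ) (ht : 0 < t) (v : Ed d) :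
    Integrable (fun y => HK d i t y v) := by
  refine (((integrable_qK d t ht).mul_const ‖v‖).const_mul (cK d * t)).mono' ?_
    (Eventually.of_forall fun y => ?_)
  · exact (HK_measurable d i t _ (by fun_prop)).aestronglyMeasurable
  · exact HK_bound d i t ht y _

lemma comp_hasDerivAt (d : ℕ) (i : Fin (d + 1)) (p t : ℝ) (hp : 1 < p) (ht : 0 < t)
    (f : Ed d → Ed d)
    (hf : MemLp f (ENNReal.ofReal p) volume) (hm : Measurable f) (x : Ed d) :
    HasDerivAt (fun τ => ∫ y, HK d i τ y (f (x - y)))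
      (∫ y, HK' d i t y (f (x - y) - f x)) t := by
  have key : HasDerivAt (fun τ => ∫ y, HK d i τ y (f (x - y) - f x))
      (∫ y, HK' d i t y (f (x - y) - f x)) t := by
    refine (hasDerivAt_integral_of_dominated_loc_of_deriv_le (μ := (volume : Measure (Ed d)))
      (F := fun τ y => HK d i τ y (f (x - y) - f x))
      (F' := fun τ y => HK' d i τ y (f (x - y) - f x)) (x₀ := t) (s := Set.Ioi (t / 2))
      (bound := fun y => cK d * (d + 5) * (qK d (t / 2) y * ‖f (x - y) - f x‖))
      (Ioi_mem_nhds (half_lt_self ht)) ?_ ?_ ?_ ?_ ?_ ?_).2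
    · exact Eventually.of_forall fun τ =>
        (HK_measurable d i τ _ (by fun_prop)).aestronglyMeasurable
    · exact integrable_HK d i p t hp ht f hf hm x (f x)
    · exact (HK'_measurable d i t _ (by fun_prop)).aestronglyMeasurable
    · refine Eventually.of_forall fun y τ hτ => ?_
      have hτ' : t / 2 < τ := hτ
      have := cK_nonneg d
      have := qK_nonneg d (t / 2) y
      refine (HK'_bound d i τ (by linarith) y _).trans ?_
      gcongr
      · exact qK_anti d _ _ (by linarith) hτ'.le y
      · exact div_le_of_le_mul₀ (norm_nonneg _) (norm_nonneg _) (abs_real_inner_le_norm _ _)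
    · exact (integrable_qK_mul d p (t / 2) hp (by linarith) f hf hm x (f x)).const_mul _
    · refine Eventually.of_forall fun y τ hτ => ?_
      have hτ' : t / 2 < τ := hτ
      exact HK_hasDerivAt d i τ (by linarith) y _
  have := key.add_const (∫ y, HK d i 1 y (f x))
  refine this.congr_of_eventuallyEq ?_
  filter_upwards [Ioi_mem_nhds ht] with τ hτ
  rw [← integral_HK d i τ hτ, ← integral_add (integrable_HK d i p τ hp hτ f hf hm x (f x))
    (integrable_HK_const d i τ hτ (f x))]
  simp only [← HK_add, sub_add_cancel]

lemma enorm_comp_le (d : ℕ) (i : Fin (d + 1)) (t : ℝ) (ht : 0 < t) (f : Ed d → Ed d) (x : Ed d) :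
    ‖∫ y, HK' d i t y (f (x - y) - f x)‖ₑ ≤ ENNReal.ofReal (cK d * (d + 5)) *
      ∫⁻ y, ENNReal.ofReal (qK d t y) *
        ENNReal.ofReal (|inner ℝ (f (x - y) - f x) y| / ‖y‖) := by
  have := cK_nonneg d
  refine (enorm_integral_le_lintegral_enorm _).trans ?_
  rw [← lintegral_const_mul' _ _ ENNReal.ofReal_ne_top]
  refine lintegral_mono fun y => ?_
  rw [← ENNReal.ofReal_mul (qK_nonneg d t y), ← ENNReal.ofReal_mul (by positivity),
    Real.enorm_eq_ofReal_abs]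
  exact ENNReal.ofReal_le_ofReal (HK'_bound d i t ht y _)

lemma enorm_deriv_le (d : ℕ) (p t : ℝ) (hp : 1 < p) (ht : 0 < t)
    (f : Ed d → Ed d)
    (hf : MemLp f (ENNReal.ofReal p) volume) (hm : Measurable f) (x : Ed d) :
    ‖deriv (fun τ => pConv d τ (appendZero d f) x) t‖ₑ ≤
      ENNReal.ofReal ((d + 1) * (cK d * (d + 5))) *
      ∫⁻ y, ENNReal.ofReal (qK d t y) *
        ENNReal.ofReal (|inner ℝ (f (x - y) - f x) y| / ‖y‖) := by
  have h1 : HasDerivAt (fun τ => (fun i => ∫ y, HK d i τ y (f (x - y)) : Fin (d + 1) → ℝ))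
      (fun i => ∫ y, HK' d i t y (f (x - y) - f x)) t :=
    hasDerivAt_pi.2 fun i => comp_hasDerivAt d i p t hp ht f hf hm x
  have h2 : HasDerivAt (fun τ => pConv d τ (appendZero d f) x)
      ((EuclideanSpace.equiv (Fin (d + 1)) ℝ).symm
        (fun i => ∫ y, HK' d i t y (f (x - y) - f x))) t := by
    simp only [pConv, sum_pEntry]
    exact ((EuclideanSpace.equiv (Fin (d + 1)) ℝ).symm.toContinuousLinearMap.hasFDerivAt).comp_hasDerivAt
      t h1
  rw [h2.deriv]
  set v := ((EuclideanSpace.equiv (Fin (d + 1)) ℝ).symm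
        (fun i => ∫ y, HK' d i t y (f (x - y) - f x))) with hv
  have h3 : ‖v‖ₑ ≤ ∑ i, ‖v i‖ₑ := by
    have e : v = ∑ i, EuclideanSpace.single i (v i) := by
      ext j; simp [Finset.sum_apply, Pi.single_apply]
    calc ‖v‖ₑ = ‖∑ i, EuclideanSpace.single i (v i)‖ₑ := by rw [← e]
      _ ≤ ∑ i, ‖EuclideanSpace.single i (v i)‖ₑ := enorm_sum_le _ _
      _ = _ := by simp [← ofReal_norm]
  refine h3.trans ((Finset.sum_le_sum fun i _ => enorm_comp_le d i t ht f x).trans ?_)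
  have := cK_nonneg d
  rw [Finset.sum_const, Finset.card_univ, Fintype.card_fin, nsmul_eq_mul, ← mul_assoc,
    ENNReal.ofReal_mul (p := (d : ℝ) + 1) (by positivity), ← Nat.cast_succ,
    ENNReal.ofReal_natCast]

/-- The projected difference quotient numerator. -/
def gK (d : ℕ) (f : Ed d → Ed d) (x y : Ed d) : ℝ≥0∞ :=
  ENNReal.ofReal (|inner ℝ (f (x - y) - f x) y| / ‖y‖)

lemma gK_measurable (d : ℕ) (f : Ed d → Ed d) (hm : Measurable f) :
    Measurable (fun z : Ed d × Ed d => gK d f z.1 z.2) := by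
  unfold gK
  fun_prop

lemma gK_measurable_right (d : ℕ) (f : Ed d → Ed d) (hm : Measurable f) (x : Ed d) :
    Measurable (gK d f x) := by
  unfold gK
  fun_prop

lemma gK_zero (d : ℕ) (f : Ed d → Ed d) (x : Ed d) : gK d f x 0 = 0 := by
  simp [gK]

lemma lintegral_smul_scale (d : ℕ) (t : ℝ) (ht : 0 < t) (g : Ed d → ℝ≥0∞) (hg : Measurable g) :
    ∫⁻ y, g y = ENNReal.ofReal (t ^ d) * ∫⁻ y, g (t • y) := by
  have h := lintegral_map (μ := volume) hg (measurable_const_smul t : Measurable (fun y : Ed d => t • y))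
  rw [Measure.map_addHaar_smul volume ht.ne', lintegral_smul_measure] at h
  rw [← h, finrank_euclideanSpace, Fintype.card_fin, smul_eq_mul, ← mul_assoc,
    ← ENNReal.ofReal_mul (by positivity), abs_of_pos (by positivity),
    mul_inv_cancel₀ (by positivity)]
  simp

def M1 (d : ℕ) (s : ℝ) : ℝ≥0∞ := ∫⁻ y : Ed d, ENNReal.ofReal (qK d 1 y) * ENNReal.ofReal (‖y‖ ^ s)

lemma M1_lt_top (d : ℕ) (s : ℝ) (hs0 : 0 < s) (hs1 : s < 1) : M1 d s < ⊤ := by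
  have := integrable_rpow_neg_one_add_norm_sq (E := Ed d) (μ := volume) (r := (d : ℝ) + 1 - s)
    (by simp; linarith)
  refine lt_of_le_of_lt ?_ this.lintegral_lt_top
  refine lintegral_mono fun y => ?_
  rw [← ENNReal.ofReal_mul (qK_nonneg _ _ _)]
  refine ENNReal.ofReal_le_ofReal ?_
  have h1 : ‖y‖ ^ s ≤ (‖y‖ ^ 2 + 1) ^ (s / 2) := by
    have : ‖y‖ ^ s = (‖y‖ ^ 2) ^ (s / 2) := by
      rw [← Real.rpow_natCast, ← Real.rpow_mul (norm_nonneg y)]; congr 1; push_cast; ring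
    rw [this]
    gcongr
    simp
  calc qK d 1 y * ‖y‖ ^ s ≤ qK d 1 y * (‖y‖ ^ 2 + 1) ^ (s / 2) := by
        gcongr
        exact qK_nonneg _ _ _
    _ = _ := by
        rw [qK, one_pow, ← Real.rpow_add (by positivity), add_comm]
        congr 1; ring

lemma M_scale (d : ℕ) (s t : ℝ) (ht : 0 < t) :
    ∫⁻ y : Ed d, ENNReal.ofReal (qK d t y) * ENNReal.ofReal (‖y‖ ^ s) =
      ENNReal.ofReal (t ^ (s - 1)) * M1 d s := by
  have hq : Measurable (fun y : Ed d => qK d t y) := by unfold qK; fun_prop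
  rw [lintegral_smul_scale d t ht _ (by fun_prop), M1,
    ← lintegral_const_mul' _ _ ENNReal.ofReal_ne_top,
    ← lintegral_const_mul' _ _ ENNReal.ofReal_ne_top]
  refine lintegral_congr fun y => ?_
  have := qK_nonneg d 1 y
  rw [qK_smul d t ht, norm_smul, Real.norm_of_nonneg ht.le, Real.mul_rpow ht.le (norm_nonneg y)]
  rw [← ENNReal.ofReal_mul (by positivity), ← ENNReal.ofReal_mul (by positivity),
    ← ENNReal.ofReal_mul (by positivity), ← ENNReal.ofReal_mul (by positivity)]
  congr 1
  have e : t ^ (s - 1) = t ^ d * (t ^ (-((d : ℝ) + 1)) * t ^ s) := by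
    rw [← Real.rpow_natCast, ← Real.rpow_add ht, ← Real.rpow_add ht]
    congr 1; ring
  rw [e]; ring

def N1 (d : ℕ) (s : ℝ) : ℝ := 1 / (1 - s) + 1 / (s + d)

lemma N_bound (d : ℕ) (s : ℝ) (hs0 : 0 < s) (hs1 : s < 1) (y : Ed d) (hy : y ≠ 0) :
    ∫⁻ t in Set.Ioi (0 : ℝ), ENNReal.ofReal (t ^ (-s)) * ENNReal.ofReal (qK d t y) ≤
      ENNReal.ofReal (N1 d s * ‖y‖ ^ (-s - d)) := by
  have hr : 0 < ‖y‖ := norm_pos_iff.2 hy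
  set r := ‖y‖ with hrd
  have hd : (0 : ℝ) ≤ d := by positivity
  have hsd : 0 < s + d := by linarith
  have h1s : 0 < 1 - s := by linarith
  have hsq : ∀ u : ℝ, 0 < u → (u ^ 2) ^ (-((d : ℝ) + 1) / 2) = u ^ (-((d : ℝ) + 1)) := by
    intro u hu
    rw [← Real.rpow_natCast, ← Real.rpow_mul hu.le]; congr 1; push_cast; ring
  have hA : ∫⁻ t in Set.Ioc 0 r, ENNReal.ofReal (t ^ (-s)) * ENNReal.ofReal (qK d t y) ≤
      ENNReal.ofReal (1 / (1 - s) * r ^ (-s - d)) := by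
    have hi : IntegrableOn (fun t : ℝ => t ^ (-s)) (Set.Ioc 0 r) :=
      (intervalIntegral.intervalIntegrable_rpow' (by linarith)).1
    calc ∫⁻ t in Set.Ioc 0 r, ENNReal.ofReal (t ^ (-s)) * ENNReal.ofReal (qK d t y)
        ≤ ∫⁻ t in Set.Ioc 0 r, ENNReal.ofReal (t ^ (-s)) * ENNReal.ofReal (r ^ (-((d : ℝ) + 1))) := by
          refine lintegral_mono fun t => ?_
          dsimp only
          gcongr
          rw [← hsq r hr]
          unfold qK
          refine Real.rpow_le_rpow_of_nonpos (by positivity) ?_ (by linarith)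
          rw [← hrd]; nlinarith [sq_nonneg t]
      _ = ENNReal.ofReal (1 / (1 - s) * r ^ (-s - d)) := by
          rw [lintegral_mul_const' _ _ ENNReal.ofReal_ne_top,
            ← ofReal_integral_eq_lintegral_ofReal hi, ← intervalIntegral.integral_of_le hr.le,
            integral_rpow (Or.inl (by linarith)), Real.zero_rpow (by linarith), sub_zero,
            ← ENNReal.ofReal_mul (by rw [show -s + 1 = 1 - s by ring]; positivity)]
          · congr 1
            have : r ^ (-s - d) = r ^ (-s + 1) * r ^ (-((d : ℝ) + 1)) := by
              rw [← Real.rpow_add hr]; congr 1; ring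
            rw [this, show -s + 1 = 1 - s by ring]; ring
          · filter_upwards [ae_restrict_mem measurableSet_Ioc] with t ht
            exact Real.rpow_nonneg ht.1.le _
  have hB : ∫⁻ t in Set.Ioi r, ENNReal.ofReal (t ^ (-s)) * ENNReal.ofReal (qK d t y) ≤
      ENNReal.ofReal (1 / (s + d) * r ^ (-s - d)) := by
    have hi : IntegrableOn (fun t : ℝ => t ^ (-s - d - 1)) (Set.Ioi r) :=
      integrableOn_Ioi_rpow_of_lt (by linarith) hr
    calc ∫⁻ t in Set.Ioi r, ENNReal.ofReal (t ^ (-s)) * ENNReal.ofReal (qK d t y)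
        ≤ ∫⁻ t in Set.Ioi r, ENNReal.ofReal (t ^ (-s - d - 1)) := by
          refine setLIntegral_mono' measurableSet_Ioi fun t ht => ?_
          have ht' : r < t := ht
          have ht0 : 0 < t := hr.trans ht'
          rw [← ENNReal.ofReal_mul (by positivity)]
          refine ENNReal.ofReal_le_ofReal ?_
          have : t ^ (-s - d - 1) = t ^ (-s) * t ^ (-((d : ℝ) + 1)) := by
            rw [← Real.rpow_add ht0]; congr 1; ring
          rw [this]
          gcongr
          rw [← hsq t ht0]
          unfold qK
          refine Real.rpow_le_rpow_of_nonpos (by positivity) ?_ (by linarith)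
          rw [← hrd]; nlinarith [sq_nonneg r]
      _ = ENNReal.ofReal (1 / (s + d) * r ^ (-s - d)) := by
          rw [← ofReal_integral_eq_lintegral_ofReal hi, integral_Ioi_rpow_of_lt (by linarith) hr]
          · congr 1
            rw [show -s - d - 1 + 1 = -s - (d : ℝ) by ring, show -s - (d : ℝ) = -(s + d) by ring]
            rw [neg_div_neg_eq]; ring
          · filter_upwards [ae_restrict_mem measurableSet_Ioi] with t ht
            exact Real.rpow_nonneg (hr.trans ht).le _
  rw [← Set.Ioc_union_Ioi_eq_Ioi hr.le]
  refine (lintegral_union_le _ _ _).trans ((add_le_add hA hB).trans ?_)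
  rw [← ENNReal.ofReal_add (by positivity) (by positivity), N1, add_mul]

lemma holder_step (d : ℕ) (s p t : ℝ) (hs0 : 0 < s) (hp : 1 < p)
    (G : Ed d → ℝ≥0∞) (hG : Measurable G) (hG0 : G 0 = 0) :
    (∫⁻ y, ENNReal.ofReal (qK d t y) * G y) ^ p ≤
      (∫⁻ y : Ed d, ENNReal.ofReal (qK d t y) * ENNReal.ofReal (‖y‖ ^ s)) ^ (p - 1) *
      ∫⁻ y, ENNReal.ofReal (qK d t y) * ENNReal.ofReal (‖y‖ ^ (-(s * (p - 1)))) * G y ^ p := by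
  have hp0 : 0 < p := by linarith
  have hp1 : 0 < p - 1 := by linarith
  set q := p / (p - 1) with hq
  have hq0 : 0 < q := by positivity
  have hpq : q.HolderConjugate p := by
    rw [Real.holderConjugate_comm]
    exact Real.HolderConjugate.conjExponent hp
  have hqm : Measurable (fun y : Ed d => qK d t y) := by unfold qK; fun_prop
  set b := s * (p - 1) / p with hb
  have hb0 : 0 < b := by positivity
  let f1 : Ed d → ℝ≥0∞ := fun y => ENNReal.ofReal (qK d t y) ^ (1 / q) * ENNReal.ofReal (‖y‖ ^ b)
  let f2 : Ed d → ℝ≥0∞ := fun y =>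
    ENNReal.ofReal (qK d t y) ^ (1 / p) * ENNReal.ofReal (‖y‖ ^ (-b)) * G y
  have e1 : ∀ y, f1 y ^ q = ENNReal.ofReal (qK d t y) * ENNReal.ofReal (‖y‖ ^ s) := by
    intro y
    simp only [f1]
    rw [ENNReal.mul_rpow_of_nonneg _ _ hq0.le, ← ENNReal.rpow_mul,
      ENNReal.ofReal_rpow_of_nonneg (by positivity) hq0.le, ← Real.rpow_mul (norm_nonneg y),
      one_div_mul_cancel hq0.ne', ENNReal.rpow_one]
    congr 4
    rw [hb, hq]; field_simp
  have e2 : ∀ y, f2 y ^ p = ENNReal.ofReal (qK d t y) *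
      ENNReal.ofReal (‖y‖ ^ (-(s * (p - 1)))) * G y ^ p := by
    intro y
    simp only [f2]
    rw [ENNReal.mul_rpow_of_nonneg _ _ hp0.le, ENNReal.mul_rpow_of_nonneg _ _ hp0.le,
      ← ENNReal.rpow_mul,
      ENNReal.ofReal_rpow_of_nonneg (by positivity) hp0.le, ← Real.rpow_mul (norm_nonneg y),
      one_div_mul_cancel hp0.ne', ENNReal.rpow_one]
    congr 5
    rw [hb]; field_simp
  have e3 : ∀ y, ENNReal.ofReal (qK d t y) * G y ≤ (f1 * f2) y := by
    intro y
    rcases eq_or_ne y 0 with rfl | hy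
    · simp [hG0]
    have hr : 0 < ‖y‖ := norm_pos_iff.2 hy
    refine le_of_eq ?_
    have a1 : ENNReal.ofReal (qK d t y) ^ (1 / q) * ENNReal.ofReal (qK d t y) ^ (1 / p) =
        ENNReal.ofReal (qK d t y) := by
      rw [← ENNReal.rpow_add_of_nonneg _ _ (by positivity) (by positivity)]
      have := hpq.inv_add_inv_eq_one
      rw [one_div, one_div, this, ENNReal.rpow_one]
    have a2 : ENNReal.ofReal (‖y‖ ^ b) * ENNReal.ofReal (‖y‖ ^ (-b)) = 1 := by
      rw [← ENNReal.ofReal_mul (by positivity), ← Real.rpow_add hr]; simp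
    simp only [f1, f2, Pi.mul_apply]
    calc ENNReal.ofReal (qK d t y) * G y
        = (ENNReal.ofReal (qK d t y) ^ (1 / q) * ENNReal.ofReal (qK d t y) ^ (1 / p)) *
          (ENNReal.ofReal (‖y‖ ^ b) * ENNReal.ofReal (‖y‖ ^ (-b))) * G y := by rw [a1, a2, mul_one]
      _ = _ := by ring
  have H := ENNReal.lintegral_mul_le_Lp_mul_Lq (volume : Measure (Ed d)) hpq
    (f := f1) (g := f2) (by fun_prop) (by fun_prop)
  have H2 := (lintegral_mono e3).trans H
  simp only [e1, e2] at H2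
  refine (ENNReal.rpow_le_rpow H2 hp0.le).trans (le_of_eq ?_)
  rw [ENNReal.mul_rpow_of_nonneg _ _ hp0.le, ← ENNReal.rpow_mul, ← ENNReal.rpow_mul,
    one_div_mul_cancel hp0.ne', ENNReal.rpow_one]
  congr 2
  rw [hq]; field_simp

lemma projGagP_eq (d : ℕ) (s p : ℝ) (f : Ed d → Ed d) (hp : 1 < p) :
    projGagP d s p Set.univ f =
      ∫⁻ x, ∫⁻ y, ENNReal.ofReal (‖y‖ ^ (-((d : ℝ) + s * p))) * gK d f x y ^ p := by
  unfold projGagP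
  simp only [Measure.restrict_univ]
  refine lintegral_congr fun x => ?_
  rw [← lintegral_sub_left_eq_self _ x]
  refine lintegral_congr fun y => ?_
  unfold gK
  rw [ENNReal.ofReal_rpow_of_nonneg (by positivity) (by linarith),
    ← ENNReal.ofReal_mul (by positivity)]
  congr 1
  have : x - y - x = -y := by abel
  rw [this, inner_neg_right, abs_neg, norm_neg, Real.rpow_neg (norm_nonneg y)]
  ring

lemma J_measurable (d : ℕ) (s p : ℝ) (f : Ed d → Ed d) (hm : Measurable f) :
    Measurable (fun z : (ℝ × Ed d) × Ed d => ENNReal.ofReal (z.1.1 ^ (-s)) *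
      ENNReal.ofReal (qK d z.1.1 z.2) * ENNReal.ofReal (‖z.2‖ ^ (-(s * (p - 1)))) *
        gK d f z.1.2 z.2 ^ p) := by
  unfold qK gK
  fun_prop

lemma Jx_measurable (d : ℕ) (s p : ℝ) (f : Ed d → Ed d) (hm : Measurable f) (x : Ed d) :
    Measurable (fun z : ℝ × Ed d => ENNReal.ofReal (z.1 ^ (-s)) *
      ENNReal.ofReal (qK d z.1 z.2) * ENNReal.ofReal (‖z.2‖ ^ (-(s * (p - 1)))) *
        gK d f x z.2 ^ p) := by
  unfold qK gK
  fun_prop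

set_option maxHeartbeats 400000 in
lemma main_measurable (d : ℕ) (s p : ℝ) (hs0 : 0 < s) (hs1 : s < 1) (hp : 1 < p)
    (f : Ed d → Ed d) (hf : MemLp f (ENNReal.ofReal p) volume) (hm : Measurable f) :
    (∫⁻ t in Set.Ioi (0 : ℝ),
            (ENNReal.ofReal (t ^ (1 - s)) *
                eLpNorm (fun x => deriv (fun τ => pConv d τ (appendZero d f) x) t)
                  (ENNReal.ofReal p) volume) ^ p *
              ENNReal.ofReal t⁻¹) ≤
      (ENNReal.ofReal ((d + 1) * (cK d * (d + 5))) ^ p * M1 d s ^ (p - 1) *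
        ENNReal.ofReal (N1 d s)) * projGagP d s p Set.univ f := by
  have hp0 : 0 < p := by linarith
  set A := ENNReal.ofReal ((d + 1) * (cK d * (d + 5))) with hA
  set W : Ed d → ℝ≥0∞ := fun y => ENNReal.ofReal (‖y‖ ^ (-(s * (p - 1)))) with hW
  have hMtop := M1_lt_top d s hs0 hs1
  have hAM : A ^ p * M1 d s ^ (p - 1) ≠ ⊤ :=
    ENNReal.mul_ne_top (ENNReal.rpow_ne_top_of_nonneg hp0.le ENNReal.ofReal_ne_top)
      (ENNReal.rpow_ne_top_of_nonneg (by linarith) hMtop.ne)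
  -- pointwise in time
  have step1 : ∀ t ∈ Set.Ioi (0 : ℝ), (ENNReal.ofReal (t ^ (1 - s)) *
                eLpNorm (fun x => deriv (fun τ => pConv d τ (appendZero d f) x) t)
                  (ENNReal.ofReal p) volume) ^ p *
              ENNReal.ofReal t⁻¹ ≤ (A ^ p * M1 d s ^ (p - 1)) *
        ∫⁻ x, ∫⁻ y, ENNReal.ofReal (t ^ (-s)) * ENNReal.ofReal (qK d t y) * W y * gK d f x y ^ p := by
    intro t ht
    have ht : 0 < t := ht
    have a1 : eLpNorm (fun x => deriv (fun τ => pConv d τ (appendZero d f) x) t)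
                  (ENNReal.ofReal p) volume ^ p ≤
        ∫⁻ x, (A * ∫⁻ y, ENNReal.ofReal (qK d t y) * gK d f x y) ^ p := by
      rw [eLpNorm_eq_lintegral_rpow_enorm_toReal (by simpa using hp0) ENNReal.ofReal_ne_top,
        ENNReal.toReal_ofReal hp0.le, ← ENNReal.rpow_mul, one_div_mul_cancel hp0.ne',
        ENNReal.rpow_one]
      refine lintegral_mono fun x => ?_
      have h := enorm_deriv_le d p t hp ht f hf hm x
      rw [← hA] at h
      exact ENNReal.rpow_le_rpow h hp0.le
    have a2 : ∀ x, (A * ∫⁻ y, ENNReal.ofReal (qK d t y) * gK d f x y) ^ p ≤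
        (A ^ p * M1 d s ^ (p - 1)) * (ENNReal.ofReal (t ^ ((s - 1) * (p - 1))) *
          ∫⁻ y, ENNReal.ofReal (qK d t y) * W y * gK d f x y ^ p) := by
      intro x
      have h := holder_step d s p t hs0 hp (gK d f x) (gK_measurable_right d f hm x)
        (gK_zero d f x)
      rw [M_scale d s t ht, ENNReal.mul_rpow_of_nonneg _ _ (by linarith),
        ENNReal.ofReal_rpow_of_nonneg (by positivity) (by linarith), ← Real.rpow_mul ht.le] at h
      rw [ENNReal.mul_rpow_of_nonneg _ _ hp0.le]
      calc _ ≤ _ := mul_le_mul_right h (A ^ p)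
        _ = _ := by ring
    have a3 := a1.trans (lintegral_mono a2)
    rw [lintegral_const_mul' _ _ hAM, lintegral_const_mul' _ _ ENNReal.ofReal_ne_top] at a3
    rw [ENNReal.mul_rpow_of_nonneg _ _ hp0.le,
      ENNReal.ofReal_rpow_of_nonneg (by positivity) hp0.le, ← Real.rpow_mul ht.le]
    have a4 : ∫⁻ x, ∫⁻ y, ENNReal.ofReal (t ^ (-s)) * ENNReal.ofReal (qK d t y) * W y * gK d f x y ^ p
        = ENNReal.ofReal (t ^ (-s)) *
          ∫⁻ x, ∫⁻ y, ENNReal.ofReal (qK d t y) * W y * gK d f x y ^ p := by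
      rw [← lintegral_const_mul' _ _ ENNReal.ofReal_ne_top]
      refine lintegral_congr fun x => ?_
      rw [← lintegral_const_mul' _ _ ENNReal.ofReal_ne_top]
      refine lintegral_congr fun y => ?_
      ring
    have a5 : ENNReal.ofReal (t ^ (-s)) = ENNReal.ofReal (t ^ ((1 - s) * p)) *
        ENNReal.ofReal (t ^ ((s - 1) * (p - 1))) * ENNReal.ofReal t⁻¹ := by
      rw [← ENNReal.ofReal_mul (by positivity), ← ENNReal.ofReal_mul (by positivity),
        ← Real.rpow_neg_one t, ← Real.rpow_add ht, ← Real.rpow_add ht]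
      congr 2; ring
    rw [a4, a5]
    set I := ∫⁻ x, ∫⁻ y, ENNReal.ofReal (qK d t y) * W y * gK d f x y ^ p
    calc _ ≤ ENNReal.ofReal (t ^ ((1 - s) * p)) * (A ^ p * M1 d s ^ (p - 1) *
          (ENNReal.ofReal (t ^ ((s - 1) * (p - 1))) * I)) * ENNReal.ofReal t⁻¹ := by
          gcongr
      _ = _ := by ring
  refine (setLIntegral_mono' measurableSet_Ioi step1).trans ?_
  rw [lintegral_const_mul' _ _ hAM, mul_assoc (A ^ p * M1 d s ^ (p - 1))]
  refine mul_le_mul_right ?_ _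
  -- Tonelli
  have hJ := J_measurable d s p f hm
  simp only [hW]
  rw [lintegral_lintegral_swap (hJ.lintegral_prod_right').aemeasurable, projGagP_eq d s p f hp,
    ← lintegral_const_mul' _ _ ENNReal.ofReal_ne_top]
  refine lintegral_mono fun x => ?_
  have hJx := Jx_measurable d s p f hm x
  dsimp only
  rw [lintegral_lintegral_swap hJx.aemeasurable,
    ← lintegral_const_mul' _ _ ENNReal.ofReal_ne_top]
  refine lintegral_mono fun y => ?_
  dsimp only
  rcases eq_or_ne y 0 with rfl | hy
  · simp [gK_zero, ENNReal.zero_rpow_of_pos hp0]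
  have hr : 0 < ‖y‖ := norm_pos_iff.2 hy
  simp only [mul_assoc _ (ENNReal.ofReal (‖y‖ ^ (-(s * (p - 1)))))]
  have hqy : Measurable (fun t => qK d t y) := by
    unfold qK
    fun_prop
  rw [lintegral_mul_const _ (by fun_prop)]
  refine (mul_le_mul_left (N_bound d s hs0 hs1 y hy) _).trans (le_of_eq ?_)
  have hN : 0 ≤ N1 d s := by
    unfold N1
    have : 0 < 1 - s := by linarith
    positivity
  rw [← mul_assoc, ← mul_assoc, ← ENNReal.ofReal_mul (by positivity),
    ← ENNReal.ofReal_mul (by positivity), mul_assoc, ← Real.rpow_add hr]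
  congr 4
  ring

/-- **Square-function bound by the projected seminorm.** For `s ∈ (0,1)`, `1 < p < ∞` and
`f ∈ L^p(ℝ^d;ℝ^d)`, with `F = (f,0)` and `U(x,t) = (ℙ_t ∗ F)(x)`, there is
`C = C(d,p,s) > 0` such that
`(∫_0^∞ (t^{1−s} ‖∂_t U(·,t)‖_{L^p})^p dt/t)^{1/p} ≤ C [f]_{𝒳^s_p(ℝ^d)}`. -/
theorem square_function_bound_by_proj_seminorm (d : ℕ) (s p : ℝ)
    (hs : s ∈ Set.Ioo (0 : ℝ) 1) (hp : 1 < p) :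
    ∃ C : ℝ, 0 < C ∧
      ∀ f : Ed d → Ed d, MemLp f (ENNReal.ofReal p) volume →
        (∫⁻ t in Set.Ioi (0 : ℝ),
            (ENNReal.ofReal (t ^ (1 - s)) *
                eLpNorm (fun x => deriv (fun τ => pConv d τ (appendZero d f) x) t)
                  (ENNReal.ofReal p) volume) ^ p *
              ENNReal.ofReal t⁻¹) ^ (1 / p) ≤
          ENNReal.ofReal C * projSem d s p Set.univ f := by
  obtain ⟨hs0, hs1⟩ := hs
  have hp0 : 0 < p := by linarith
  set B := ENNReal.ofReal ((d + 1) * (cK d * (d + 5))) ^ p * M1 d s ^ (p - 1) *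
        ENNReal.ofReal (N1 d s) with hB
  have hBt : B ≠ ⊤ :=
    ENNReal.mul_ne_top (ENNReal.mul_ne_top
      (ENNReal.rpow_ne_top_of_nonneg hp0.le ENNReal.ofReal_ne_top)
      (ENNReal.rpow_ne_top_of_nonneg (by linarith) (M1_lt_top d s hs0 hs1).ne))
      ENNReal.ofReal_ne_top
  have hBt' : B ^ (1 / p) ≠ ⊤ := ENNReal.rpow_ne_top_of_nonneg (by positivity) hBt
  refine ⟨(B ^ (1 / p)).toReal + 1, by positivity, fun f hf => ?_⟩
  -- pass to a measurable representative
  set g := hf.1.mk f with hg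
  have hgm : Measurable g := hf.1.stronglyMeasurable_mk.measurable
  have hfg : f =ᵐ[volume] g := hf.1.ae_eq_mk
  have hgL : MemLp g (ENNReal.ofReal p) volume := (memLp_congr_ae hfg).1 hf
  have hconv : ∀ τ x, pConv d τ (appendZero d f) x = pConv d τ (appendZero d g) x := by
    intro τ x
    simp only [pConv, sum_pEntry]
    congr 1
    funext i
    refine integral_congr_ae ?_
    have := (quasiMeasurePreserving_sub_left_of_right_invariant (volume : Measure (Ed d)) x).ae_eq_comp hfg
    filter_upwards [this] with y hy
    simp only [Function.comp] at hy
    rw [hy]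
  have hsem : projGagP d s p Set.univ f = projGagP d s p Set.univ g := by
    unfold projGagP
    simp only [Measure.restrict_univ]
    refine lintegral_congr_ae ?_
    filter_upwards [hfg] with x hx
    refine lintegral_congr_ae ?_
    filter_upwards [hfg] with y hy
    rw [hx, hy]
  simp only [hconv]
  rw [projSem, hsem]
  have h := ENNReal.rpow_le_rpow (main_measurable d s p hs0 hs1 hp g hgL hgm)
    (show 0 ≤ 1 / p by positivity)
  refine h.trans ?_
  rw [ENNReal.mul_rpow_of_nonneg _ _ (by positivity)]
  gcongr
  rw [← hB, ENNReal.ofReal_add (by positivity) (by positivity), ENNReal.ofReal_toReal hBt']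
  exact le_self_add
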